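/- Let γ > 0, let m ≥ 1, let f : ℝ^n → [0,∞) be a γ-concave function with compact support, and let E be an m-dimensional subspace of ℝ^n. Define F : E^⊥ → [0,∞) by F(y) = ∫_E f(y+z) dz (integration with respect to m-dimensional Lebesgue measure on E). Then F is γ/(mγ+1)-concave on E^⊥, i.e. F(λ y_1 + (1-λ) y_2) ≥ ( λ F(y_1)^{γ/(mγ+1)} + (1-λ) F(y_2)^{γ/(mγ+1)} )^{(mγ+1)/γ} for all 0 ≤ λ ≤ 1 and all y_1, y_2 ∈ E^⊥ with F(y_1)·F(y_2) ≠ 0. -/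

import Mathlib

open MeasureTheory Set
open scoped RealInnerProductSpace

open scoped Pointwise in
lemma vol_affine (l c : ℝ) (hl : 0 < l) (K : Set ℝ) :
    volume ((fun x => l * x + c) '' K) = ENNReal.ofReal l * volume K := by
  have : (fun x => l * x + c) '' K = (fun x => x + c) '' (l • K) := by
    rw [← Set.image_smul, Set.image_image]; rfl
  rw [this]
  simp only [image_add_right, measure_preimage_add_right, Measure.addHaar_smul]
  simp [abs_of_pos hl]

lemma bm_compact (l l' : ℝ) (hl : 0 < l) (hl' : 0 < l') (K L C : Set ℝ)
    (hK : IsCompact K) (hL : IsCompact L) (hKn : K.Nonempty) (hLn : L.Nonempty)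
    (hC : ∀ x ∈ K, ∀ y ∈ L, l * x + l' * y ∈ C) :
    ENNReal.ofReal l * volume K + ENNReal.ofReal l' * volume L ≤ volume C := by
  obtain ⟨a, haK, ha⟩ := hK.exists_isGreatest hKn
  obtain ⟨b, hbL, hb⟩ := hL.exists_isLeast hLn
  rw [← vol_affine l (l' * b) hl K, ← vol_affine l' (l * a) hl' L]
  have hm : MeasurableSet ((fun x => l' * x + l * a) '' L) :=
    (hL.image (by fun_prop)).measurableSet
  rw [← measure_union₀ hm.nullMeasurableSet]
  · apply measure_mono
    rintro _ (⟨x, hx, rfl⟩ | ⟨y, hy, rfl⟩)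
    · exact hC x hx b hbL
    · have := hC a haK y hy
      simpa [add_comm] using this
  · refine measure_mono_null (t := {l * a + l' * b}) ?_ (by simp)
    rintro _ ⟨⟨x, hx, rfl⟩, ⟨y, hy, h⟩⟩
    have h1 := mul_le_mul_of_nonneg_left (ha hx) hl.le
    have h2 := mul_le_mul_of_nonneg_left (hb hy) hl'.le
    simp only [mem_singleton_iff] at *
    linarith

lemma bm_one (l l' : ℝ) (hl : 0 < l) (hl' : 0 < l') (A B C : Set ℝ)
    (hA : MeasurableSet A) (hB : MeasurableSet B) (hAn : A.Nonempty) (hBn : B.Nonempty)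
    (hC : ∀ x ∈ A, ∀ y ∈ B, l * x + l' * y ∈ C) :
    ENNReal.ofReal l * volume A + ENNReal.ofReal l' * volume B ≤ volume C := by
  obtain ⟨a, ha⟩ := hAn
  obtain ⟨b, hb⟩ := hBn
  rw [hA.measure_eq_iSup_isCompact, hB.measure_eq_iSup_isCompact]
  simp only [ENNReal.mul_iSup, iSup_and']
  apply ENNReal.iSup_add_iSup_le
  intro K L
  by_cases hK : K ⊆ A ∧ IsCompact K
  swap
  · simp only [hK, iSup_false, bot_eq_zero', zero_add]
    apply iSup_le
    intro hL
    refine le_trans ?_ (bm_compact l l' hl hl' {a} (insert b L) C isCompact_singleton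
      (hL.2.insert b) (by simp) (by simp) ?_)
    · refine le_add_left ?_
      gcongr
      simp
    · rintro x rfl y (rfl | hy)
      · exact hC _ ha _ hb
      · exact hC _ ha _ (hL.1 hy)
  by_cases hL : L ⊆ B ∧ IsCompact L
  swap
  · simp only [hL, iSup_false, bot_eq_zero', add_zero]
    apply iSup_le
    intro hK
    refine le_trans ?_ (bm_compact l l' hl hl' (insert a K) {b} C (hK.2.insert a)
      isCompact_singleton (by simp) (by simp) ?_)
    · refine le_add_right ?_
      gcongr
      simp
    · rintro x (rfl | hx) y rfl
      · exact hC _ ha _ hb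
      · exact hC _ (hK.1 hx) _ hb
  simp only [hK, hL, and_self, iSup_pos]
  refine le_trans ?_ (bm_compact l l' hl hl' (insert a K) (insert b L) C (hK.2.insert a)
      (hL.2.insert b) (by simp) (by simp) ?_)
  · gcongr <;> simp
  · rintro x (rfl | hx) y (rfl | hy)
    · exact hC _ ha _ hb
    · exact hC _ ha _ (hL.1 hy)
    · exact hC _ (hK.1 hx) _ hb
    · exact hC _ (hK.1 hx) _ (hL.1 hy)

lemma layer (u : ℝ → ENNReal) (hu : Measurable u) (h1 : ∀ x, u x ≤ 1) :
    ∫⁻ x, u x = ∫⁻ t in Ioi (0:ℝ), volume {x | ENNReal.ofReal t < u x} := by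
  have h := lintegral_eq_lintegral_meas_lt (volume : Measure ℝ) (f := fun x => (u x).toReal)
    (ae_of_all _ fun x => ENNReal.toReal_nonneg) hu.ennreal_toReal.aemeasurable
  have e : ∀ x, u x ≠ ⊤ := fun x => ne_top_of_le_ne_top (by simp) (h1 x)
  simp only [ENNReal.ofReal_toReal (e _)] at h
  rw [h]
  refine setLIntegral_congr_fun measurableSet_Ioi fun t ht => ?_
  simp only [ENNReal.ofReal_lt_iff_lt_toReal (le_of_lt ht) (e _)]

lemma bbl_norm (l l' : ℝ) (hl : 0 < l) (hl' : 0 < l') (u v w : ℝ → ENNReal)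
    (hu : Measurable u) (hv : Measurable v) (hw : Measurable w)
    (hu1 : ∀ x, u x ≤ 1) (hv1 : ∀ x, v x ≤ 1) (hw1 : ∀ x, w x ≤ 1)
    (hus : ∀ t < 1, ∃ x, t < u x) (hvs : ∀ t < 1, ∃ x, t < v x)
    (h : ∀ x y, u x ≠ 0 → v y ≠ 0 → min (u x) (v y) ≤ w (l * x + l' * y)) :
    ENNReal.ofReal l * (∫⁻ x, u x) + ENNReal.ofReal l' * (∫⁻ x, v x) ≤ ∫⁻ x, w x := by
  rw [layer u hu hu1, layer v hv hv1, layer w hw hw1]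
  have hanti : ∀ g : ℝ → ENNReal, Measurable fun t : ℝ => volume {x | ENNReal.ofReal t < g x} := by
    intro g
    apply Antitone.measurable
    intro s t hst
    apply measure_mono
    intro x hx
    exact lt_of_le_of_lt (ENNReal.ofReal_le_ofReal hst) hx
  rw [← lintegral_const_mul _ (hanti u), ← lintegral_const_mul _ (hanti v),
    ← lintegral_add_left ((hanti u).const_mul _)]
  refine lintegral_mono fun t => ?_
  by_cases ht : ENNReal.ofReal t < 1
  · apply bm_one l l' hl hl' _ _ _ (measurableSet_lt measurable_const hu)
      (measurableSet_lt measurable_const hv) (hus _ ht) (hvs _ ht)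
    intro x hx y hy
    exact lt_of_lt_of_le (lt_min hx hy) (h x y (ne_bot_of_gt hx) (ne_bot_of_gt hy))
  · have e : ∀ g : ℝ → ENNReal, (∀ x, g x ≤ 1) → {x | ENNReal.ofReal t < g x} = ∅ := by
      intro g hg
      ext x
      simp only [mem_ofPred_eq, mem_empty_iff_false, iff_false, not_lt]
      exact (hg x).trans (not_lt.1 ht)
    simp [e u hu1, e v hv1]

/-- weighted power mean in `[0,∞]` -/
noncomputable def pmean (p l l' : ℝ) (a b : ENNReal) : ENNReal :=
  (ENNReal.ofReal l * a ^ p + ENNReal.ofReal l' * b ^ p) ^ (1 / p)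

lemma pmean_mono {p l l' : ℝ} (hp : 0 < p) {a b a' b' : ENNReal} (ha : a ≤ a') (hb : b ≤ b') :
    pmean p l l' a b ≤ pmean p l l' a' b' := by
  unfold pmean
  have : 0 ≤ 1 / p := by positivity
  gcongr

lemma pmean_mul {p l l' : ℝ} (hp : 0 < p) (c a b : ENNReal) :
    pmean p l l' (c * a) (c * b) = c * pmean p l l' a b := by
  unfold pmean
  rw [ENNReal.mul_rpow_of_nonneg _ _ hp.le, ENNReal.mul_rpow_of_nonneg _ _ hp.le,
    mul_left_comm, mul_left_comm (ENNReal.ofReal l'), ← mul_add,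
    ENNReal.mul_rpow_of_nonneg _ _ (by positivity), ← ENNReal.rpow_mul,
    mul_one_div_cancel hp.ne', ENNReal.rpow_one]

lemma pmean_cont {p l l' : ℝ} :
    Continuous fun z : ENNReal × ENNReal => pmean p l l' z.1 z.2 := by
  unfold pmean
  refine (ENNReal.continuous_rpow_const).comp (Continuous.add ?_ ?_)
  · exact (ENNReal.continuous_const_mul ENNReal.ofReal_ne_top).comp
      (ENNReal.continuous_rpow_const.comp continuous_fst)
  · exact (ENNReal.continuous_const_mul ENNReal.ofReal_ne_top).comp
      (ENNReal.continuous_rpow_const.comp continuous_snd)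

lemma pmean_ne_top {p l l' : ℝ} (hp : 0 < p) {a b : ENNReal} (ha : a ≠ ⊤) (hb : b ≠ ⊤) :
    pmean p l l' a b ≠ ⊤ := by
  unfold pmean
  have : 0 ≤ 1 / p := by positivity
  refine ENNReal.rpow_ne_top_of_nonneg this (ENNReal.add_ne_top.2 ⟨?_, ?_⟩)
  · exact ENNReal.mul_ne_top ENNReal.ofReal_ne_top (ENNReal.rpow_ne_top_of_nonneg hp.le ha)
  · exact ENNReal.mul_ne_top ENNReal.ofReal_ne_top (ENNReal.rpow_ne_top_of_nonneg hp.le hb)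

lemma pmean_ne_zero {p l l' : ℝ} (hp : 0 < p) (hl : 0 < l) {a b : ENNReal} (ha : a ≠ 0) :
    pmean p l l' a b ≠ 0 := by
  unfold pmean
  have h1 : 0 < 1 / p := by positivity
  have h2 : ENNReal.ofReal l ≠ 0 := by simpa using hl
  rw [Ne, ENNReal.rpow_eq_zero_iff_of_pos h1]
  simp [h2, ENNReal.rpow_eq_zero_iff_of_pos hp, ha]

lemma pmean_holder {γ l l' : ℝ} (hγ : 0 < γ) (A B P Q : ENNReal) :
    pmean (γ / (γ + 1)) l l' (A * P) (B * Q) ≤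
      pmean γ l l' A B * (ENNReal.ofReal l * P + ENNReal.ofReal l' * Q) := by
  set L := ENNReal.ofReal l
  set L' := ENNReal.ofReal l'
  have hpq : (γ + 1).HolderConjugate ((γ + 1) / γ) := by
    rw [Real.holderConjugate_iff]
    refine ⟨by linarith, ?_⟩
    field_simp
    ring
  have hp0 : 0 < γ / (γ + 1) := by positivity
  have H := ENNReal.inner_le_Lp_mul_Lq Finset.univ
    ![L ^ (1 / (γ + 1)) * A ^ (γ / (γ + 1)), L' ^ (1 / (γ + 1)) * B ^ (γ / (γ + 1))]
    ![L ^ (γ / (γ + 1)) * P ^ (γ / (γ + 1)), L' ^ (γ / (γ + 1)) * Q ^ (γ / (γ + 1))] hpq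
  simp only [Fin.sum_univ_two, Matrix.cons_val_zero, Matrix.cons_val_one] at H
  have e1 : ∀ L A P : ENNReal, L ^ (1 / (γ + 1)) * A ^ (γ / (γ + 1)) *
      (L ^ (γ / (γ + 1)) * P ^ (γ / (γ + 1))) = L * (A * P) ^ (γ / (γ + 1)) := by
    intro L A P
    rw [ENNReal.mul_rpow_of_nonneg _ _ hp0.le, mul_mul_mul_comm,
      ← ENNReal.rpow_add_of_nonneg _ _ (by positivity) hp0.le]
    congr 1
    rw [← add_div, add_comm 1 γ, div_self (by positivity), ENNReal.rpow_one]
  have e2 : ∀ L A : ENNReal, (L ^ (1 / (γ + 1)) * A ^ (γ / (γ + 1))) ^ (γ + 1) = L * A ^ γ := by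
    intro L A
    rw [ENNReal.mul_rpow_of_nonneg _ _ (by positivity), ← ENNReal.rpow_mul, ← ENNReal.rpow_mul,
      one_div_mul_cancel (by positivity), div_mul_cancel₀ _ (by positivity), ENNReal.rpow_one]
  have e3 : ∀ L A : ENNReal, (L ^ (γ / (γ + 1)) * A ^ (γ / (γ + 1))) ^ ((γ + 1) / γ) = L * A := by
    intro L A
    have : γ / (γ + 1) * ((γ + 1) / γ) = 1 := by field_simp
    rw [ENNReal.mul_rpow_of_nonneg _ _ (by positivity), ← ENNReal.rpow_mul, ← ENNReal.rpow_mul,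
      this, ENNReal.rpow_one, ENNReal.rpow_one]
  simp only [e1, e2, e3] at H
  unfold pmean
  have h0 : 0 ≤ 1 / (γ / (γ + 1)) := by positivity
  refine (ENNReal.rpow_le_rpow H h0).trans ?_
  rw [ENNReal.mul_rpow_of_nonneg _ _ h0, ← ENNReal.rpow_mul, ← ENNReal.rpow_mul]
  have e4 : 1 / (γ + 1) * (1 / (γ / (γ + 1))) = 1 / γ := by field_simp
  have e5 : 1 / ((γ + 1) / γ) * (1 / (γ / (γ + 1))) = 1 := by field_simp
  rw [e4, e5, ENNReal.rpow_one]

lemma bbl_one_bdd {γ l l' : ℝ} (hγ : 0 < γ) (hl : 0 < l) (hl' : 0 < l') (u v w : ℝ → ENNReal)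
    (hu : Measurable u) (hv : Measurable v) (hw : Measurable w) (k : ENNReal) (hk : k ≠ ⊤)
    (huk : ∀ x, u x ≤ k) (hvk : ∀ x, v x ≤ k)
    (h : ∀ x y, u x ≠ 0 → v y ≠ 0 → pmean γ l l' (u x) (v y) ≤ w (l * x + l' * y))
    (hu0 : ∫⁻ x, u x ≠ 0) (hv0 : ∫⁻ x, v x ≠ 0) :
    pmean (γ / (γ + 1)) l l' (∫⁻ x, u x) (∫⁻ x, v x) ≤ ∫⁻ x, w x := by
  set A := ⨆ x, u x with hA
  set B := ⨆ x, v x with hB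
  have hAt : A ≠ ⊤ := ne_top_of_le_ne_top hk (iSup_le huk)
  have hBt : B ≠ ⊤ := ne_top_of_le_ne_top hk (iSup_le hvk)
  have hA0 : A ≠ 0 := by
    intro h0
    apply hu0
    have : ∀ x, u x = 0 := by simpa [hA] using h0
    simp [this]
  have hB0 : B ≠ 0 := by
    intro h0
    apply hv0
    have : ∀ x, v x = 0 := by simpa [hB] using h0
    simp [this]
  set M := pmean γ l l' A B with hM
  have hMt : M ≠ ⊤ := pmean_ne_top hγ hAt hBt
  have hM0 : M ≠ 0 := pmean_ne_zero hγ hl hA0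
  have hsup : ∀ g : ℝ → ENNReal, (⨆ x, g x) ≠ 0 → (⨆ x, g x) ≠ ⊤ → ∀ t < 1, ∃ x,
      t < g x / (⨆ x, g x) := by
    intro g h0 ht t ht1
    have : t * (⨆ x, g x) < ⨆ x, g x := by
      calc t * (⨆ x, g x) < 1 * (⨆ x, g x) := ENNReal.mul_lt_mul_left h0 ht ht1
        _ = _ := one_mul _
    obtain ⟨x, hx⟩ := lt_iSup_iff.1 this
    exact ⟨x, (ENNReal.lt_div_iff_mul_lt (Or.inl h0) (Or.inl ht)).2 hx⟩
  have H := bbl_norm l l' hl hl' (fun x => u x / A) (fun x => v x / B)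
    (fun x => min (w x / M) 1) (hu.div_const _) (hv.div_const _)
    ((hw.div_const _).min measurable_const)
    (fun x => ENNReal.div_le_of_le_mul (by simpa using le_iSup u x))
    (fun x => ENNReal.div_le_of_le_mul (by simpa using le_iSup v x))
    (fun x => min_le_right _ _) (hsup u hA0 hAt) (hsup v hB0 hBt) ?_
  · have e1 : ∫⁻ x, u x = A * ∫⁻ x, u x / A := by
      rw [← lintegral_const_mul _ (hu.div_const _)]
      simp only [ENNReal.mul_div_cancel hA0 hAt]
    have e2 : ∫⁻ x, v x = B * ∫⁻ x, v x / B := by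
      rw [← lintegral_const_mul _ (hv.div_const _)]
      simp only [ENNReal.mul_div_cancel hB0 hBt]
    rw [e1, e2]
    refine (pmean_holder hγ _ _ _ _).trans ?_
    calc M * _ ≤ M * ∫⁻ x, min (w x / M) 1 := by gcongr
      _ ≤ M * ∫⁻ x, w x / M := by gcongr; exact min_le_left _ _
      _ = ∫⁻ x, w x := by
        rw [← lintegral_const_mul _ (hw.div_const _)]
        simp only [ENNReal.mul_div_cancel hM0 hMt]
  · intro x y hx hy
    have hx' : u x ≠ 0 := fun h => hx (by simp [h])
    have hy' : v y ≠ 0 := fun h => hy (by simp [h])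
    refine le_min ?_ (min_le_of_left_le
      (ENNReal.div_le_of_le_mul (by simpa using le_iSup u x)))
    rw [ENNReal.le_div_iff_mul_le (Or.inl hM0) (Or.inl hMt), hM, ← pmean_mul hγ]
    refine le_trans (pmean_mono hγ ?_ ?_) (h x y hx' hy')
    · calc _ ≤ u x / A * A := by gcongr; exact min_le_left _ _
        _ = u x := ENNReal.div_mul_cancel hA0 hAt
    · calc _ ≤ v y / B * B := by gcongr; exact min_le_right _ _
        _ = v y := ENNReal.div_mul_cancel hB0 hBt

lemma trunc_tendsto (u : ℝ → ENNReal) (hu : Measurable u) :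
    Filter.Tendsto (fun k : ℕ => ∫⁻ x, min (u x) k) Filter.atTop (nhds (∫⁻ x, u x)) := by
  apply lintegral_tendsto_of_tendsto_of_monotone
  · intro k; exact (hu.min measurable_const).aemeasurable
  · refine ae_of_all _ fun x i j hij => ?_
    dsimp only
    gcongr
  · refine ae_of_all _ fun x => ?_
    have : Filter.Tendsto (fun k : ℕ => min (u x) (k : ENNReal)) Filter.atTop
      (nhds (min (u x) ⊤)) := tendsto_const_nhds.min ENNReal.tendsto_nat_nhds_top
    simpa using this

lemma bbl_one {γ l l' : ℝ} (hγ : 0 < γ) (hl : 0 < l) (hl' : 0 < l') (u v w : ℝ → ENNReal)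
    (hu : Measurable u) (hv : Measurable v) (hw : Measurable w)
    (h : ∀ x y, u x ≠ 0 → v y ≠ 0 → pmean γ l l' (u x) (v y) ≤ w (l * x + l' * y))
    (hu0 : ∫⁻ x, u x ≠ 0) (hv0 : ∫⁻ x, v x ≠ 0) :
    pmean (γ / (γ + 1)) l l' (∫⁻ x, u x) (∫⁻ x, v x) ≤ ∫⁻ x, w x := by
  have tu := trunc_tendsto u hu
  have tv := trunc_tendsto v hv
  have T := ((pmean_cont (l := l) (l' := l') (p := γ / (γ + 1))).tendsto _).comp (tu.prodMk_nhds tv)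
  refine le_of_tendsto T ?_
  filter_upwards [tu.eventually_ne hu0, tv.eventually_ne hv0] with k h1 h2
  refine bbl_one_bdd hγ hl hl' _ _ w (hu.min measurable_const) (hv.min measurable_const) hw
    k (by simp) (fun x => min_le_right _ _) (fun x => min_le_right _ _) ?_ h1 h2
  intro x y hx hy
  refine (pmean_mono hγ (min_le_left _ _) (min_le_left _ _)).trans (h x y ?_ ?_)
  · intro h; simp [h] at hx
  · intro h; simp [h] at hy

lemma bbl_pi (m : ℕ) {γ l l' : ℝ} (hγ : 0 < γ) (hl : 0 < l) (hl' : 0 < l')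
    (u v w : (Fin m → ℝ) → ENNReal)
    (hu : Measurable u) (hv : Measurable v) (hw : Measurable w)
    (h : ∀ x y, u x ≠ 0 → v y ≠ 0 → pmean γ l l' (u x) (v y) ≤ w (l • x + l' • y))
    (hu0 : ∫⁻ x, u x ≠ 0) (hv0 : ∫⁻ x, v x ≠ 0) :
    pmean (γ / (m * γ + 1)) l l' (∫⁻ x, u x) (∫⁻ x, v x) ≤ ∫⁻ x, w x := by
  induction m with
  | zero =>
    rw [lintegral_unique] at hu0 hv0
    rw [lintegral_unique, lintegral_unique, lintegral_unique]
    simp only [Nat.cast_zero, zero_mul, zero_add, div_one]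
    have e : volume (univ : Set (Fin 0 → ℝ)) = 1 := by
      rw [volume_pi, Measure.pi_univ]; simp
    rw [e, mul_one] at hu0 hv0
    rw [e, mul_one, mul_one, mul_one]
    refine (h _ _ hu0 hv0).trans (le_of_eq ?_)
    congr 1
    exact Subsingleton.elim _ _
  | succ m ih =>
    have hmp := (volume_preserving_piFinSuccAbove (fun _ : Fin (m + 1) => ℝ) 0).symm
    have key : ∀ g : (Fin (m + 1) → ℝ) → ENNReal, Measurable g →
        ∫⁻ x, g x = ∫⁻ s : ℝ, ∫⁻ z : Fin m → ℝ, g (Fin.cons s z) := by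
      intro g hg
      rw [← hmp.lintegral_comp hg]
      rw [Measure.volume_eq_prod, lintegral_prod _ (by fun_prop)]
      simp [MeasurableEquiv.piFinSuccAbove, Fin.insertNthEquiv]
    have hcons : Measurable fun z : ℝ × (Fin m → ℝ) => (Fin.cons z.1 z.2 : Fin (m + 1) → ℝ) := by
      have := hmp.measurable
      simpa [MeasurableEquiv.piFinSuccAbove, Fin.insertNthEquiv] using this
    have hms : ∀ g : (Fin (m + 1) → ℝ) → ENNReal, Measurable g → ∀ s : ℝ,
        Measurable fun z : Fin m → ℝ => g (Fin.cons s z) := by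
      intro g hg s
      exact hg.comp (hcons.comp (measurable_const.prodMk measurable_id))
    have hmi : ∀ g : (Fin (m + 1) → ℝ) → ENNReal, Measurable g →
        Measurable fun s : ℝ => ∫⁻ z : Fin m → ℝ, g (Fin.cons s z) := by
      intro g hg
      exact (hg.comp hcons).lintegral_prod_right'
    rw [key u hu, key v hv, key w hw]
    rw [key u hu] at hu0
    rw [key v hv] at hv0
    have hp : 0 < γ / (m * γ + 1) := by positivity
    have := bbl_one hp hl hl' _ _ _ (hmi u hu) (hmi v hv) (hmi w hw) ?_ hu0 hv0
    · convert this using 2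
      push_cast
      field_simp
      ring
    · intro s t hs ht
      refine ih _ _ _ (hms u hu s) (hms v hv t) (hms w hw _) ?_ hs ht
      intro x y hx hy
      have := h _ _ hx hy
      convert this using 2
      ext i
      refine Fin.cases ?_ (fun j => ?_) i <;> simp

lemma integ (m : ℕ) {γ : ℝ} (hγ : 0 < γ) (g : (Fin m → ℝ) → ℝ) (hg : Measurable g)
    (h0 : ∀ x, 0 ≤ g x) (R : ℝ) (hR : ∀ x, g x ≠ 0 → ‖x‖ ≤ R)
    (hc : ∀ x y, g x ≠ 0 → g y ≠ 0 → ∀ l : ℝ, 0 ≤ l → l ≤ 1 →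
        (l * g x ^ γ + (1 - l) * g y ^ γ) ^ (1 / γ) ≤ g (l • x + (1 - l) • y)) :
    Integrable g := by
  set S : Set (Fin m → ℝ) := Function.support g with hS
  have hpos : ∀ x ∈ S, 0 < g x := fun x hx => lt_of_le_of_ne (h0 x) (Ne.symm hx)
  have hconv : ConcaveOn ℝ S (fun x => g x ^ γ) := by
    have hX : ∀ x ∈ S, ∀ y ∈ S, ∀ a b : ℝ, 0 ≤ a → 0 ≤ b → a + b = 1 →
        0 < a * g x ^ γ + b * g y ^ γ := by
      intro x hx y hy a b ha hb hab
      have h1 := Real.rpow_pos_of_pos (hpos x hx) γ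
      have h2 := Real.rpow_pos_of_pos (hpos y hy) γ
      rcases ha.eq_or_lt with rfl | ha
      · have : b = 1 := by linarith
        simp [this, h2]
      · positivity
    constructor
    · intro x hx y hy a b ha hb hab
      obtain rfl : b = 1 - a := by linarith
      exact (lt_of_lt_of_le (Real.rpow_pos_of_pos (hX x hx y hy _ _ ha hb hab) _)
        (hc x y hx hy a ha (by linarith))).ne'
    · intro x hx y hy a b ha hb hab
      have hp := hX x hx y hy _ _ ha hb hab
      obtain rfl : b = 1 - a := by linarith
      have := Real.rpow_le_rpow (Real.rpow_nonneg hp.le _)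
        (hc x y hx hy a ha (by linarith)) hγ.le
      rwa [← Real.rpow_mul hp.le, one_div_mul_cancel hγ.ne', Real.rpow_one] at this
  rcases (interior S).eq_empty_or_nonempty with hemp | ⟨x₀, hx₀⟩
  · have hz : volume S = 0 := by
      refine measure_mono_null ?_ (hconv.1.addHaar_frontier volume)
      rw [frontier, hemp, sdiff_empty]
      exact subset_closure
    have : g =ᵐ[volume] 0 := by
      rw [Filter.EventuallyEq, ae_iff]
      exact hz
    exact (integrable_zero _ _ _).congr this.symm
  · have hcont := (hconv.continuousOn_interior.continuousAt (isOpen_interior.mem_nhds hx₀))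
    have hev : ∀ᶠ x in nhds x₀, g x ^ γ < g x₀ ^ γ + 1 :=
      hcont.eventually (gt_mem_nhds (by linarith))
    obtain ⟨r, hr, hball⟩ := Metric.eventually_nhds_iff.1 hev
    have hx₀S : x₀ ∈ S := interior_subset hx₀
    have hR0 : 0 ≤ R := (norm_nonneg _).trans (hR x₀ hx₀S)
    obtain ⟨t, ht0, ht1, htr⟩ : ∃ t : ℝ, 0 < t ∧ t ≤ 1 ∧ t * (2 * R) < r := by
      refine ⟨min 1 (r / (2 * (2 * R + 1))), by positivity, min_le_left _ _, ?_⟩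
      calc _ ≤ r / (2 * (2 * R + 1)) * (2 * R) := by gcongr; exact min_le_right _ _
        _ < r := by
          rw [div_mul_eq_mul_div, div_lt_iff₀ (by positivity)]
          nlinarith
    have hbd : ∀ x, g x ≤ ((g x₀ ^ γ + 1) / t) ^ (1 / γ) := by
      intro x
      have hM : 0 ≤ (g x₀ ^ γ + 1) / t := by
        have := Real.rpow_nonneg (h0 x₀) γ
        positivity
      by_cases hx : g x = 0
      · rw [hx]; exact Real.rpow_nonneg hM _
      have h1 := hconv.2 hx hx₀S ht0.le (sub_nonneg.2 ht1) (by ring)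
      have h2 : g (t • x + (1 - t) • x₀) ^ γ < g x₀ ^ γ + 1 := by
        apply hball
        have : t • x + (1 - t) • x₀ - x₀ = t • (x - x₀) := by module
        rw [dist_eq_norm, this, norm_smul, Real.norm_of_nonneg ht0.le]
        refine lt_of_le_of_lt ?_ htr
        gcongr
        refine (norm_sub_le _ _).trans ?_
        linarith [hR x hx, hR x₀ hx₀S]
      have h3 : 0 ≤ (1 - t) * g x₀ ^ γ :=
        mul_nonneg (sub_nonneg.2 ht1) (Real.rpow_nonneg (h0 x₀) γ)
      simp only [smul_eq_mul] at h1
      have h4 : g x ^ γ ≤ (g x₀ ^ γ + 1) / t := by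
        rw [le_div_iff₀ ht0]; linarith
      calc g x = (g x ^ γ) ^ (1 / γ) := by
            rw [← Real.rpow_mul (h0 x), mul_one_div_cancel hγ.ne', Real.rpow_one]
        _ ≤ _ := Real.rpow_le_rpow (Real.rpow_nonneg (h0 x) _) h4 (by positivity)
    have hSb : S ⊆ Metric.closedBall 0 R := by
      intro x hx
      simpa using hR x hx
    rw [← integrableOn_iff_integrable_of_support_subset hSb]
    refine IntegrableOn.of_bound measure_closedBall_lt_top hg.aestronglyMeasurable
      (((g x₀ ^ γ + 1) / t) ^ (1 / γ)) (ae_of_all _ fun x => ?_)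
    rw [Real.norm_of_nonneg (h0 x)]
    exact hbd x

lemma haus_integral {n : ℕ} (E : Submodule ℝ (EuclideanSpace ℝ (Fin n))) (m : ℕ)
    (hE : Module.finrank ℝ E = m) :
    ∃ (e : (Fin m → ℝ) ≃L[ℝ] E) (c : NNReal), ∀ h : EuclideanSpace ℝ (Fin n) → ℝ,
      ∫ z in (E : Set (EuclideanSpace ℝ (Fin n))), h z ∂μH[(m : ℝ)] =
        (c : ℝ) * ∫ x : Fin m → ℝ, h (e x) := by
  subst hE
  let e : (Fin (Module.finrank ℝ E) → ℝ) ≃L[ℝ] E := ContinuousLinearEquiv.ofFinrankEq (by simp)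
  let μ : Measure E := μH[(Module.finrank ℝ E : ℝ)]
  have : μ.IsAddHaarMeasure := isAddHaarMeasure_hausdorffMeasure
  let ν : Measure (Fin (Module.finrank ℝ E) → ℝ) := μ.map e.symm
  have : ν.IsAddHaarMeasure := e.symm.isAddHaarMeasure_map μ
  have hν := Measure.isAddLeftInvariant_eq_smul ν volume
  refine ⟨e, Measure.addHaarScalarFactor ν volume, fun h => ?_⟩
  have h1 := (isometry_subtype_coe (s := (E : Set (EuclideanSpace ℝ (Fin n))))).map_hausdorffMeasure
    (d := (Module.finrank ℝ E : ℝ)) (Or.inl (by positivity))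
  rw [Subtype.range_coe] at h1
  have hEm : MeasurableSet (E : Set (EuclideanSpace ℝ (Fin n))) :=
    E.closed_of_finiteDimensional.measurableSet
  rw [← h1, (MeasurableEmbedding.subtype_coe hEm).integral_map]
  have h2 : ∫ x, h (e x) ∂ν = ∫ x : E, h x ∂μ := by
    have := e.symm.toHomeomorph.measurableEmbedding.integral_map (μ := μ) (fun x => h (e x))
    refine Eq.trans this ?_
    simp
  refine h2.symm.trans ?_
  refine (congrArg (fun ρ => ∫ x, h (e x) ∂ρ) hν).trans ?_
  exact integral_smul_nnreal_measure _ _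

theorem marginal_gamma_concave
    (n : ℕ) (γ : ℝ) (hγ : 0 < γ) (m : ℕ) (hm : 1 ≤ m)
    (f : EuclideanSpace ℝ (Fin n) → ℝ)
    (hf_nonneg : ∀ x, 0 ≤ f x)
    (hf_meas : Measurable f)
    (hf_supp : HasCompactSupport f)
    (hf_concave : ∀ x y : EuclideanSpace ℝ (Fin n), f x ≠ 0 → f y ≠ 0 →
      ∀ l : ℝ, 0 ≤ l → l ≤ 1 →
        (l * f x ^ γ + (1 - l) * f y ^ γ) ^ (1 / γ) ≤ f (l • x + (1 - l) • y))
    (E : Submodule ℝ (EuclideanSpace ℝ (Fin n))) (hE : Module.finrank ℝ E = m)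
    (F : EuclideanSpace ℝ (Fin n) → ℝ)
    (hF : ∀ y, F y = ∫ z in (E : Set (EuclideanSpace ℝ (Fin n))), f (y + z) ∂μH[(m : ℝ)]) :
    ∀ y₁ y₂ : EuclideanSpace ℝ (Fin n), y₁ ∈ Eᗮ → y₂ ∈ Eᗮ →
      F y₁ ≠ 0 → F y₂ ≠ 0 → ∀ l : ℝ, 0 ≤ l → l ≤ 1 →
        (l * F y₁ ^ (γ / (m * γ + 1)) + (1 - l) * F y₂ ^ (γ / (m * γ + 1))) ^
            ((m * γ + 1) / γ) ≤
          F (l • y₁ + (1 - l) • y₂) := by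
  intro y₁ y₂ _ _ hy₁ hy₂ l hl0 hl1
  obtain ⟨e, c, hec⟩ := haus_integral E m hE
  set p := γ / (m * γ + 1) with hp
  have hp0 : 0 < p := by positivity
  have hpi : (m * γ + 1) / γ = 1 / p := by rw [hp, one_div_div]
  rw [hpi]
  have hFn : ∀ y, 0 ≤ F y := by
    intro y; rw [hF]; exact integral_nonneg fun z => hf_nonneg _
  have hinv : ∀ a : ℝ, 0 ≤ a → (a ^ p) ^ (1 / p) = a := by
    intro a ha
    rw [← Real.rpow_mul ha, mul_one_div_cancel hp0.ne', Real.rpow_one]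
  rcases hl0.eq_or_lt with rfl | hl0'
  · simp [hinv _ (hFn y₂), -one_div]
  rcases hl1.eq_or_lt with rfl | hl1'
  · simp [hinv _ (hFn y₁), -one_div]
  -- the slices
  let g : EuclideanSpace ℝ (Fin n) → (Fin m → ℝ) → ℝ := fun y x => f (y + (e x : EuclideanSpace ℝ (Fin n)))
  have hecont : Continuous fun x : Fin m → ℝ => (e x : EuclideanSpace ℝ (Fin n)) :=
    continuous_subtype_val.comp e.continuous
  have hgm : ∀ y, Measurable (g y) := fun y =>
    hf_meas.comp (continuous_const.add hecont).measurable
  have hcomb : ∀ (y y' : EuclideanSpace ℝ (Fin n)) (x x' : Fin m → ℝ) (a b : ℝ),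
      a • (y + (e x : EuclideanSpace ℝ (Fin n))) + b • (y' + (e x' : EuclideanSpace ℝ (Fin n))) =
      (a • y + b • y') + (e (a • x + b • x') : EuclideanSpace ℝ (Fin n)) := by
    intro y y' x x' a b
    simp only [map_add, map_smul, Submodule.coe_add, Submodule.coe_smul]
    module
  have hgi : ∀ y, Integrable (g y) := by
    intro y
    obtain ⟨R, hR⟩ := hf_supp.isBounded.exists_norm_le
    refine integ m hγ (g y) (hgm y) (fun x => hf_nonneg _)
      (‖(e.symm : E →L[ℝ] (Fin m → ℝ))‖ * (R + ‖y‖)) ?_ ?_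
    · intro x hx
      have h1 : ‖y + (e x : EuclideanSpace ℝ (Fin n))‖ ≤ R := hR _ (subset_tsupport f hx)
      have h2 : ‖(e x : E)‖ ≤ R + ‖y‖ := by
        have : (e x : EuclideanSpace ℝ (Fin n)) = (y + (e x : EuclideanSpace ℝ (Fin n))) - y := by
          abel
        rw [Submodule.coe_norm, this]
        exact (norm_sub_le _ _).trans (by linarith)
      calc ‖x‖ = ‖(e.symm : E →L[ℝ] (Fin m → ℝ)) (e x)‖ := by simp
        _ ≤ _ := ContinuousLinearMap.le_opNorm _ _
        _ ≤ _ := by gcongr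
    · intro x x' hx hx' a ha ha1
      have := hf_concave _ _ hx hx' a ha ha1
      rw [hcomb] at this
      have e1 : a • y + (1 - a) • y = y := by module
      rw [e1] at this
      exact this
  have hFg : ∀ y, ENNReal.ofReal (F y) = (c : ENNReal) * ∫⁻ x, ENNReal.ofReal (g y x) := by
    intro y
    rw [hF, hec (fun z => f (y + z)), ENNReal.ofReal_mul c.coe_nonneg, ENNReal.ofReal_coe_nnreal,
      ← ofReal_integral_eq_lintegral_ofReal (hgi y) (ae_of_all _ fun x => hf_nonneg _)]
  have hne : ∀ y, F y ≠ 0 → ∫⁻ x, ENNReal.ofReal (g y x) ≠ 0 := by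
    intro y hy h0
    have := hFg y
    rw [h0, mul_zero, ENNReal.ofReal_eq_zero] at this
    exact hy (le_antisymm this (hFn y))
  have hpm : ∀ (q a b : ℝ), 0 < q → 0 ≤ a → 0 ≤ b →
      pmean q l (1 - l) (ENNReal.ofReal a) (ENNReal.ofReal b) =
        ENNReal.ofReal ((l * a ^ q + (1 - l) * b ^ q) ^ (1 / q)) := by
    intro q a b hq ha hb
    have h1 : 0 ≤ 1 - l := sub_nonneg.2 hl1
    have ha' := Real.rpow_nonneg ha q
    have hb' := Real.rpow_nonneg hb q
    unfold pmean
    rw [ENNReal.ofReal_rpow_of_nonneg ha hq.le, ENNReal.ofReal_rpow_of_nonneg hb hq.le,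
      ← ENNReal.ofReal_mul hl0, ← ENNReal.ofReal_mul h1,
      ← ENNReal.ofReal_add (by positivity) (by positivity),
      ENNReal.ofReal_rpow_of_nonneg (by positivity) (by positivity)]
  rw [← ENNReal.ofReal_le_ofReal_iff (hFn _), ← hpm p _ _ hp0 (hFn _) (hFn _), hFg, hFg, hFg,
    pmean_mul hp0]
  gcongr
  refine bbl_pi m hγ hl0' (sub_pos.2 hl1') _ _ _ (hgm _).ennreal_ofReal (hgm _).ennreal_ofReal
    (hgm _).ennreal_ofReal ?_ (hne _ hy₁) (hne _ hy₂)
  intro x x' hx hx'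
  rw [hpm γ _ _ hγ (hf_nonneg _) (hf_nonneg _)]
  apply ENNReal.ofReal_le_ofReal
  have h1 : g y₁ x ≠ 0 := fun h => hx (by simp [h])
  have h2 : g y₂ x' ≠ 0 := fun h => hx' (by simp [h])
  have := hf_concave _ _ h1 h2 l hl0 hl1
  rw [hcomb] at this
  exact this
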